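/- Let g(X,Z) = Z² − (1/2)Z²(Z⁴ − 1) + (1/2)XZ³ ∈ ℂ[X,Z]. There exists a ℂ-algebra isomorphism Φ : ℂ[X,Y,Z,W]/(XY − Z⁴ + 1) → ℂ[X,Y,Z,W]/(XZ − (XY + Z²)² + 1) such that, writing x̄, ȳ, z̄, w̄ for the residue classes of X, Y, Z, W: Φ(x̄) = x̄, Φ(z̄) = z̄ + x̄ w̄, x̄ · Φ(ȳ) = (z̄ + x̄ w̄)⁴ − 1, and x̄² · Φ(w̄) = (x̄ ȳ + z̄²) − g(x̄, z̄ + x̄ w̄). In particular, the cylinder over the iterated Danielewski hypersurface xz = (xy + z²)² − 1 is isomorphic to the cylinder over the classical Danielewski surface xy = z⁴ − 1. -/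

import Mathlib

open MvPolynomial

/-- The polynomial ring `ℂ[X,Y,Z,W]` with `X 0 = X`, `X 1 = Y`, `X 2 = Z`, `X 3 = W`. -/
abbrev R4 : Type := MvPolynomial (Fin 4) ℂ

/-- The coordinate ring of the cylinder over the classical Danielewski surface
`xy = z⁴ - 1`. -/
abbrev WRing : Type := R4 ⧸ Ideal.span {(X 0 : R4) * X 1 - X 2 ^ 4 + 1}

/-- The coordinate ring of the cylinder over the iterated Danielewski hypersurface
`xz = (xy + z²)² - 1`. -/
abbrev HRing : Type := R4 ⧸ Ideal.span {(X 0 : R4) * X 2 - (X 0 * X 1 + X 2 ^ 2) ^ 2 + 1}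

noncomputable abbrev wMk : R4 →+* WRing :=
  Ideal.Quotient.mk _

noncomputable abbrev hMk : R4 →+* HRing :=
  Ideal.Quotient.mk _

namespace DanielewskiCylinder

section Coordinates

variable {A : Type*} [CommRing A]

/-- The quotient `((z + xw)² - (xy + z²)) / x`. -/
def sqDefect (x y z w : A) : A := -y + 2 * z * w + x * w ^ 2

/-- The image of `ȳ` under the isomorphism, that is `((z + xw)⁴ - 1) / x`. -/
def toHY (x y z w : A) : A :=
  z + 2 * (x * y + z ^ 2) * sqDefect x y z w + x * sqDefect x y z w ^ 2

lemma sq_add_mul (x y z w : A) :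
    (z + x * w) ^ 2 = x * y + z ^ 2 + x * sqDefect x y z w := by
  unfold sqDefect
  ring

lemma mul_toHY {x y z w : A} (hrel : x * z - (x * y + z ^ 2) ^ 2 + 1 = 0) :
    x * toHY x y z w = (z + x * w) ^ 4 - 1 := by
  unfold toHY sqDefect
  linear_combination hrel

variable [Algebra ℂ A] {B : Type*} [CommRing B] [Algebra ℂ B]

variable (A) in
/-- The scalar `1/2` in a `ℂ`-algebra. -/
noncomputable def half : A := algebraMap ℂ A (1 / 2)

lemma two_mul_half : 2 * half A = 1 := by
  have h : algebraMap ℂ A (2 * (1 / 2)) = 1 := by norm_num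
  rwa [map_mul, map_ofNat] at h

lemma map_half (φ : A →ₐ[ℂ] B) : φ (half A) = half B := φ.commutes _

/-- The image of `w̄` under the isomorphism, that is `(xy + z² - g(x, z + xw)) / x²`. -/
noncomputable def toHW (x y z w : A) : A :=
  z * sqDefect x y z w + (x * y + z ^ 2) * sqDefect x y z w ^ 2 -
    half A * (w - sqDefect x y z w ^ 2) * (z + x * w) ^ 2

/-- The image of `w̄` under the inverse isomorphism. -/
noncomputable def toWW (x y z w : A) : A :=
  -((half A * (z - y)) ^ 2 + 2 * y * (half A * (z - y)) + x * y * (half A * (z - y)) ^ 2 +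
    2 * (z ^ 2 * (1 + x * (half A * (z - y)))) * w + x ^ 2 * w ^ 2)

/-- The image of `ȳ` under the inverse isomorphism. -/
noncomputable def toWY (x y z w : A) : A :=
  z ^ 2 * (half A * (z - y)) + x * w + 2 * z * toWW x y z w - x * toWW x y z w ^ 2

lemma map_toHY (φ : A →ₐ[ℂ] B) (x y z w : A) :
    φ (toHY x y z w) = toHY (φ x) (φ y) (φ z) (φ w) := by
  simp [toHY, sqDefect, map_ofNat φ 2]

lemma map_toHW (φ : A →ₐ[ℂ] B) (x y z w : A) :
    φ (toHW x y z w) = toHW (φ x) (φ y) (φ z) (φ w) := by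
  simp [toHW, sqDefect, map_half, map_ofNat φ 2]

lemma map_toWW (φ : A →ₐ[ℂ] B) (x y z w : A) :
    φ (toWW x y z w) = toWW (φ x) (φ y) (φ z) (φ w) := by
  simp [toWW, map_half, map_ofNat φ 2]

lemma map_toWY (φ : A →ₐ[ℂ] B) (x y z w : A) :
    φ (toWY x y z w) = toWY (φ x) (φ y) (φ z) (φ w) := by
  simp [toWY, map_toWW, map_half, map_ofNat φ 2]

lemma half_mul_sub_toHY (x y z w : A) :
    half A * (z + x * w - toHY x y z w) = -(x * y + z ^ 2) * sqDefect x y z w +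
      x * (half A * (w - sqDefect x y z w ^ 2)) := by
  unfold toHY
  linear_combination (-(x * y + z ^ 2) * sqDefect x y z w) * two_mul_half (A := A)

lemma sq_mul_toHW {x y z w : A} (hrel : x * z - (x * y + z ^ 2) ^ 2 + 1 = 0) :
    x ^ 2 * toHW x y z w = (x * y + z ^ 2) -
      ((z + x * w) ^ 2 - half A * ((z + x * w) ^ 2 * ((z + x * w) ^ 4 - 1)) +
        half A * (x * (z + x * w) ^ 3)) := by
  rw [← mul_toHY hrel]
  unfold toHW
  linear_combination x * (z + x * w) ^ 2 * half_mul_sub_toHY x y z w +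
    (1 - x * (x * y + z ^ 2) * sqDefect x y z w) * sq_add_mul x y z w +
    x * sqDefect x y z w * hrel

lemma toWW_toH {x y z w : A} (hrel : x * z - (x * y + z ^ 2) ^ 2 + 1 = 0) :
    toWW x (toHY x y z w) (z + x * w) (toHW x y z w) = w := by
  have hb : 2 * (half A * (w - sqDefect x y z w ^ 2)) = w - sqDefect x y z w ^ 2 := by
    rw [← mul_assoc, two_mul_half, one_mul]
  unfold toWW
  rw [half_mul_sub_toHY]
  unfold toHW toHY
  rw [sq_add_mul x y z w]
  generalize half A * (w - sqDefect x y z w ^ 2) = b at *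
  generalize sqDefect x y z w = a at *
  generalize x * y + z ^ 2 = u at *
  linear_combination (u ^ 2 - x * z) * hb -
    ((-u * a + x * b) ^ 2 + w - a ^ 2 - a ^ 2 * (u ^ 2 - 1 - x * z)) * hrel

lemma toWY_toH {x y z w : A} (hrel : x * z - (x * y + z ^ 2) ^ 2 + 1 = 0) :
    toWY x (toHY x y z w) (z + x * w) (toHW x y z w) = y := by
  unfold toWY
  rw [toWW_toH hrel, half_mul_sub_toHY]
  unfold toHW
  have ha : sqDefect x y z w = -y + 2 * z * w + x * w ^ 2 := rfl
  rw [sq_add_mul x y z w]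
  generalize half A * (w - sqDefect x y z w ^ 2) = b at *
  generalize sqDefect x y z w = a at *
  generalize x * y + z ^ 2 = u at *
  linear_combination a * hrel - ha

lemma mul_toWY_add_sq (x y z w : A) : x * toWY x y z w + (z - x * toWW x y z w) ^ 2 =
    z ^ 2 * (1 + x * (half A * (z - y))) + x ^ 2 * w := by
  unfold toWY
  ring

lemma sqDefect_toW (x y z w : A) :
    sqDefect x (toWY x y z w) (z - x * toWW x y z w) (toWW x y z w) =
      -z ^ 2 * (half A * (z - y)) - x * w := by
  unfold toWY sqDefect
  ring

lemma eq_sub_two_mul_half (y z : A) : y = z - 2 * (half A * (z - y)) := by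
  linear_combination (z - y) * two_mul_half (A := A)

lemma toW_relation {x y z w : A} (hrel : x * y - z ^ 4 + 1 = 0) :
    x * (z - x * toWW x y z w) -
      (x * toWY x y z w + (z - x * toWW x y z w) ^ 2) ^ 2 + 1 = 0 := by
  rw [mul_toWY_add_sq]
  have hy := eq_sub_two_mul_half y z
  unfold toWW
  generalize half A * (z - y) = s at *
  linear_combination (1 + x * s) ^ 2 * hrel - x * hy

lemma toHY_toW {x y z w : A} (hrel : x * y - z ^ 4 + 1 = 0) :
    toHY x (toWY x y z w) (z - x * toWW x y z w) (toWW x y z w) = y := by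
  unfold toHY
  rw [sqDefect_toW, mul_toWY_add_sq]
  have hy := eq_sub_two_mul_half y z
  unfold toWW
  generalize half A * (z - y) = s at *
  linear_combination (x * s ^ 2 + 2 * s) * hrel - hy

lemma toHW_toW {x y z w : A} (hrel : x * y - z ^ 4 + 1 = 0) :
    toHW x (toWY x y z w) (z - x * toWW x y z w) (toWW x y z w) = w := by
  unfold toHW
  rw [sqDefect_toW, mul_toWY_add_sq, sub_add_cancel]
  have hy := eq_sub_two_mul_half y z
  have hh := two_mul_half (A := A)
  unfold toWW
  generalize half A * (z - y) = s at *
  generalize half A = h at *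
  linear_combination
    (z ^ 2 * ((z ^ 2 * s + x * w) ^ 2 + y * s + z ^ 2 * w)) * hh + (z ^ 2 * s + x * w) * hy +
    (s ^ 2 * (h * z ^ 2 - x * (z ^ 2 * s + x * w)) - 2 * s * (z ^ 2 * s + x * w) - w) * hrel

end Coordinates

/-- Two algebra homomorphisms out of a quotient of `ℂ[X,Y,Z,W]` agree if they agree on the
four residue classes of the variables. -/
lemma algHom_quotient_ext {I : Ideal R4} {B : Type*} [CommRing B] [Algebra ℂ B]
    {φ ψ : (R4 ⧸ I) →ₐ[ℂ] B}
    (h : ∀ i, φ (Ideal.Quotient.mk I (X i)) = ψ (Ideal.Quotient.mk I (X i))) : φ = ψ :=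
  Ideal.Quotient.algHom_ext ℂ (MvPolynomial.algHom_ext h)

/-- Evaluation at a point of a hypersurface, as a homomorphism from its coordinate ring. -/
noncomputable def evalQuotient {B : Type*} [CommRing B] [Algebra ℂ B] (F : R4) (b : Fin 4 → B)
    (hF : aeval b F = 0) : (R4 ⧸ Ideal.span {F}) →ₐ[ℂ] B :=
  Ideal.Quotient.liftₐ _ (aeval b) fun p hp => by
    obtain ⟨q, rfl⟩ := Ideal.mem_span_singleton'.1 hp
    rw [map_mul, hF, mul_zero]

@[simp]
lemma evalQuotient_mk_X {B : Type*} [CommRing B] [Algebra ℂ B] (F : R4) (b : Fin 4 → B)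
    (hF : aeval b F = 0) (i : Fin 4) :
    evalQuotient F b hF (Ideal.Quotient.mk _ (X i)) = b i :=
  aeval_X b i

lemma half_smul (r : HRing) : (1 / 2 : ℂ) • r = half HRing * r := Algebra.smul_def _ r

lemma wMk_relation : wMk (X 0) * wMk (X 1) - wMk (X 2) ^ 4 + 1 = 0 :=
  Ideal.Quotient.mk_singleton_self ((X 0 : R4) * X 1 - X 2 ^ 4 + 1)

lemma hMk_relation :
    hMk (X 0) * hMk (X 2) - (hMk (X 0) * hMk (X 1) + hMk (X 2) ^ 2) ^ 2 + 1 = 0 :=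
  Ideal.Quotient.mk_singleton_self ((X 0 : R4) * X 2 - (X 0 * X 1 + X 2 ^ 2) ^ 2 + 1)

/-- The homomorphism from the cylinder ring of `xy = z⁴ - 1` to that of
`xz = (xy + z²)² - 1`. -/
noncomputable def toH : WRing →ₐ[ℂ] HRing :=
  evalQuotient _
    ![hMk (X 0), toHY (hMk (X 0)) (hMk (X 1)) (hMk (X 2)) (hMk (X 3)),
      hMk (X 2) + hMk (X 0) * hMk (X 3), toHW (hMk (X 0)) (hMk (X 1)) (hMk (X 2)) (hMk (X 3))] <| by
    have h := mul_toHY (w := hMk (X 3)) hMk_relation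
    simp [h]

/-- The homomorphism from the cylinder ring of `xz = (xy + z²)² - 1` to that of
`xy = z⁴ - 1`. -/
noncomputable def toW : HRing →ₐ[ℂ] WRing :=
  evalQuotient _
    ![wMk (X 0), toWY (wMk (X 0)) (wMk (X 1)) (wMk (X 2)) (wMk (X 3)),
      wMk (X 2) - wMk (X 0) * toWW (wMk (X 0)) (wMk (X 1)) (wMk (X 2)) (wMk (X 3)),
      toWW (wMk (X 0)) (wMk (X 1)) (wMk (X 2)) (wMk (X 3))] <| by
    simpa using toW_relation (w := wMk (X 3)) wMk_relation

lemma toH_X0 : toH (wMk (X 0)) = hMk (X 0) := evalQuotient_mk_X ..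

lemma toH_X1 : toH (wMk (X 1)) = toHY (hMk (X 0)) (hMk (X 1)) (hMk (X 2)) (hMk (X 3)) :=
  evalQuotient_mk_X ..

lemma toH_X2 : toH (wMk (X 2)) = hMk (X 2) + hMk (X 0) * hMk (X 3) := evalQuotient_mk_X ..

lemma toH_X3 : toH (wMk (X 3)) = toHW (hMk (X 0)) (hMk (X 1)) (hMk (X 2)) (hMk (X 3)) :=
  evalQuotient_mk_X ..

lemma toW_X0 : toW (hMk (X 0)) = wMk (X 0) := evalQuotient_mk_X ..

lemma toW_X1 : toW (hMk (X 1)) = toWY (wMk (X 0)) (wMk (X 1)) (wMk (X 2)) (wMk (X 3)) :=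
  evalQuotient_mk_X ..

lemma toW_X2 : toW (hMk (X 2)) =
    wMk (X 2) - wMk (X 0) * toWW (wMk (X 0)) (wMk (X 1)) (wMk (X 2)) (wMk (X 3)) :=
  evalQuotient_mk_X ..

lemma toW_X3 : toW (hMk (X 3)) = toWW (wMk (X 0)) (wMk (X 1)) (wMk (X 2)) (wMk (X 3)) :=
  evalQuotient_mk_X ..

lemma toH_comp_toW : toH.comp toW = AlgHom.id ℂ HRing := by
  have hW := toWW_toH (w := hMk (X 3)) hMk_relation
  refine algHom_quotient_ext fun i => ?_
  rw [AlgHom.comp_apply, AlgHom.id_apply]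
  fin_cases i
  · exact (congrArg toH toW_X0).trans toH_X0
  · refine (congrArg toH toW_X1).trans ?_
    rw [map_toWY, toH_X0, toH_X1, toH_X2, toH_X3]
    exact toWY_toH hMk_relation
  · refine (congrArg toH toW_X2).trans ?_
    rw [map_sub, map_mul, map_toWW, toH_X0, toH_X1, toH_X2, toH_X3, hW]
    exact add_sub_cancel_right _ _
  · refine (congrArg toH toW_X3).trans ?_
    rw [map_toWW, toH_X0, toH_X1, toH_X2, toH_X3]
    exact hW

lemma toW_comp_toH : toW.comp toH = AlgHom.id ℂ WRing := by
  refine algHom_quotient_ext fun i => ?_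
  rw [AlgHom.comp_apply, AlgHom.id_apply]
  fin_cases i
  · exact (congrArg toW toH_X0).trans toW_X0
  · refine (congrArg toW toH_X1).trans ?_
    rw [map_toHY, toW_X0, toW_X1, toW_X2, toW_X3]
    exact toHY_toW wMk_relation
  · refine (congrArg toW toH_X2).trans ?_
    rw [map_add, map_mul, toW_X0, toW_X2, toW_X3]
    exact sub_add_cancel _ _
  · refine (congrArg toW toH_X3).trans ?_
    rw [map_toHW, toW_X0, toW_X1, toW_X2, toW_X3]
    exact toHW_toW wMk_relation

end DanielewskiCylinder

open DanielewskiCylinder in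
theorem cylinder_over_iterated_Danielewski_hypersurface_explicit_iso :
    ∃ Φ : WRing ≃ₐ[ℂ] HRing,
      Φ (wMk (X 0)) = hMk (X 0) ∧
      Φ (wMk (X 2)) = hMk (X 2) + hMk (X 0) * hMk (X 3) ∧
      hMk (X 0) * Φ (wMk (X 1)) = (hMk (X 2) + hMk (X 0) * hMk (X 3)) ^ 4 - 1 ∧
      hMk (X 0) ^ 2 * Φ (wMk (X 3)) =
        (hMk (X 0) * hMk (X 1) + hMk (X 2) ^ 2) -
          -- g(x̄, z̄ + x̄w̄) where g(X,Z) = Z² − (1/2)Z²(Z⁴ − 1) + (1/2)XZ³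
          ((hMk (X 2) + hMk (X 0) * hMk (X 3)) ^ 2
            - (1 / 2 : ℂ) • ((hMk (X 2) + hMk (X 0) * hMk (X 3)) ^ 2 *
                ((hMk (X 2) + hMk (X 0) * hMk (X 3)) ^ 4 - 1))
            + (1 / 2 : ℂ) • (hMk (X 0) * (hMk (X 2) + hMk (X 0) * hMk (X 3)) ^ 3)) := by
  refine ⟨AlgEquiv.ofAlgHom toH toW toH_comp_toW toW_comp_toH, toH_X0, toH_X2, ?_, ?_⟩
  · rw [AlgEquiv.ofAlgHom_apply, toH_X1]
    exact mul_toHY hMk_relation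
  · rw [AlgEquiv.ofAlgHom_apply, toH_X3, half_smul, half_smul]
    exact sq_mul_toHW hMk_relation
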